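/- Let (J1, J2, J3) be a para-hypercomplex structure on a 4-dimensional real vector space V and let g, h be two compatible metrics. If w ∈ V satisfies h(w,w) ≠ 0, then g(w,w) ≠ 0 and g = (g(w,w)/h(w,w))·h on all of V. -/

import Mathlib

/-! The units `i`, `j`, `k` of a para-hypercomplex structure turn `V` into a module over the split
quaternions, and a metric is compatible exactly when the units act by skew-adjoint maps, that is,
when the adjoint of `x` is `star x`. Hence `B (x • w) (y • w) = re (star x * y) * B w w`, where the
first factor does not depend on `B`. If one compatible form `h` has `h w w ≠ 0`, this identity makes
`x ↦ x • w` injective, so bijective by dimension, and every compatible form is determined by its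
value at `(w, w)`. The same argument applies to any quaternion algebra `ℍ[K, a, b]` with
`a, b ≠ 0`. -/

open LinearMap (BilinForm)
open scoped Quaternion

section QuaternionHermitian

variable {R V : Type*} [CommRing R] [AddCommGroup V] [Module R V] {a b : R}

/-- The symmetric bilinear forms for which the imaginary units of a quaternion action are
skew-adjoint: the compatible metrics of a (para-)hypercomplex structure, possibly degenerate. Only
two units are mentioned, since `k = i * j` is then skew-adjoint as well. -/
structure IsQuaternionHermitian (q : QuaternionAlgebra.Basis (Module.End R V) a 0 b)
    (B : BilinForm R V) : Prop where
  isSymm : B.IsSymm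
  isSkewAdjoint_i : B.IsSkewAdjoint q.i
  isSkewAdjoint_j : B.IsSkewAdjoint q.j

theorem self_apply_eq_zero_of_isSkewAdjoint [NoZeroDivisors R] [NeZero (2 : R)]
    {B : BilinForm R V} (hB : B.IsSymm) {f : Module.End R V} (hf : B.IsSkewAdjoint f) (w : V) :
    B w (f w) = 0 := by
  have hneg : B w (f w) = -B w (f w) :=
    calc B w (f w) = B (f w) w := hB.eq w (f w)
      _ = -B w (f w) := by simpa using hf w w
  have htwo : 2 * B w (f w) = 0 := by linear_combination hneg
  exact (mul_eq_zero.mp htwo).resolve_left two_ne_zero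

theorem isSkewAdjoint_of_mul_self_eq_neg_smul_one {B : BilinForm R V} {f : Module.End R V} {c : R}
    (hc : IsUnit c) (hff : f * f = -c • 1) (hB : ∀ u v, B (f u) (f v) = c * B u v) :
    B.IsSkewAdjoint f := fun u v ↦ by
  have hfv : f (f v) = -c • v := LinearMap.congr_fun hff v
  apply hc.mul_left_cancel
  calc c * B (f u) v = -B (f u) (f (f v)) := by simp [hfv]
    _ = c * B u ((-f) v) := by simp [hB]

namespace IsQuaternionHermitian

variable {q : QuaternionAlgebra.Basis (Module.End R V) a 0 b} {B : BilinForm R V}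

theorem isSkewAdjoint_k (hB : IsQuaternionHermitian q B) : B.IsSkewAdjoint q.k := fun u v ↦ by
  have hij : q.i (q.j u) = q.k u := LinearMap.congr_fun q.i_mul_j u
  have hji : q.j (q.i v) = -q.k v := by simp [← Module.End.mul_apply]
  have hi : B (q.i (q.j u)) v = -B (q.j u) (q.i v) := by simpa using hB.isSkewAdjoint_i (q.j u) v
  have hj : B (q.j u) (q.i v) = -B u (q.j (q.i v)) := by simpa using hB.isSkewAdjoint_j u (q.i v)
  calc B (q.k u) v = B u (q.j (q.i v)) := by rw [← hij, hi, hj, neg_neg]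
    _ = B u ((-q.k) v) := by rw [hji, LinearMap.neg_apply]

theorem isAdjointPair_lift_star (hB : IsQuaternionHermitian q B) (x : ℍ[R,a,b]) :
    LinearMap.IsAdjointPair B B (q.lift x) (q.lift (star x)) := fun u v ↦ by
  have hi : B (q.i u) v = -B u (q.i v) := by simpa using hB.isSkewAdjoint_i u v
  have hj : B (q.j u) v = -B u (q.j v) := by simpa using hB.isSkewAdjoint_j u v
  have hk : B (q.k u) v = -B u (q.k v) := by simpa using hB.isSkewAdjoint_k u v
  simp [QuaternionAlgebra.Basis.lift, hi, hj, hk]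

variable [NoZeroDivisors R] [NeZero (2 : R)]

theorem apply_lift_self (hB : IsQuaternionHermitian q B) (x : ℍ[R,a,b]) (w : V) :
    B w (q.lift x w) = x.re * B w w := by
  have hi := self_apply_eq_zero_of_isSkewAdjoint hB.isSymm hB.isSkewAdjoint_i w
  have hj := self_apply_eq_zero_of_isSkewAdjoint hB.isSymm hB.isSkewAdjoint_j w
  have hk := self_apply_eq_zero_of_isSkewAdjoint hB.isSymm hB.isSkewAdjoint_k w
  simp [QuaternionAlgebra.Basis.lift, hi, hj, hk]

theorem apply_lift_lift (hB : IsQuaternionHermitian q B) (x y : ℍ[R,a,b]) (w : V) :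
    B (q.lift x w) (q.lift y w) = (star x * y).re * B w w :=
  calc B (q.lift x w) (q.lift y w) = B w (q.lift (star x) (q.lift y w)) :=
        hB.isAdjointPair_lift_star x _ _
    _ = B w (q.lift (star x * y) w) := by rw [q.lift_mul, Module.End.mul_apply]
    _ = (star x * y).re * B w w := hB.apply_lift_self _ w

end IsQuaternionHermitian

theorem quaternionAlgebra_eq_zero_of_forall_re_mul_eq_zero [NoZeroDivisors R] (ha : a ≠ 0)
    (hb : b ≠ 0) {x : ℍ[R,a,b]} (hx : ∀ y : ℍ[R,a,b], (y * x).re = 0) : x = 0 := by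
  have hre : x.re = 0 := by simpa using hx 1
  have hi : x.imI = 0 := by simpa [ha] using hx ⟨0, 1, 0, 0⟩
  have hj : x.imJ = 0 := by simpa [hb] using hx ⟨0, 0, 1, 0⟩
  have hk : x.imK = 0 := by simpa [ha, hb] using hx ⟨0, 0, 0, 1⟩
  exact QuaternionAlgebra.ext hre hi hj hk

theorem IsQuaternionHermitian.eq_zero_of_lift_apply_eq_zero [NoZeroDivisors R] [NeZero (2 : R)]
    {q : QuaternionAlgebra.Basis (Module.End R V) a 0 b} {B : BilinForm R V}
    (hB : IsQuaternionHermitian q B) (ha : a ≠ 0) (hb : b ≠ 0) {w : V} (hw : B w w ≠ 0)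
    {x : ℍ[R,a,b]} (hx : q.lift x w = 0) : x = 0 := by
  refine quaternionAlgebra_eq_zero_of_forall_re_mul_eq_zero ha hb fun y ↦ ?_
  have hre : (y * x).re * B w w = 0 := by
    rw [← hB.apply_lift_self, q.lift_mul, Module.End.mul_apply, hx, map_zero, map_zero]
  exact (mul_eq_zero.mp hre).resolve_right hw

/-- The action of the split quaternions given by a para-hypercomplex structure
`(J₁, J₂, J₃)`, with `i = J₁`, `j = J₂` and `k = J₃`. -/
def paraHypercomplexBasis {J₁ J₂ J₃ : Module.End R V} (h₁ : J₁ * J₁ = -1) (h₂ : J₂ * J₂ = 1)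
    (h₁₂ : J₁ * J₂ = J₃) (h₂₁ : J₂ * J₁ = -J₃) :
    QuaternionAlgebra.Basis (Module.End R V) (-1 : R) 0 1 where
  i := J₁
  j := J₂
  k := J₃
  i_mul_i := by simp [h₁]
  j_mul_j := by simp [h₂]
  i_mul_j := h₁₂
  j_mul_i := by simp [h₂₁]

theorem isQuaternionHermitian_paraHypercomplexBasis {J₁ J₂ J₃ : Module.End R V}
    (h₁ : J₁ * J₁ = -1) (h₂ : J₂ * J₂ = 1) (h₁₂ : J₁ * J₂ = J₃) (h₂₁ : J₂ * J₁ = -J₃)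
    {B : BilinForm R V} (hB : ∀ u v, B u v = B v u) (hB₁ : ∀ u v, B (J₁ u) (J₁ v) = B u v)
    (hB₂ : ∀ u v, B (J₂ u) (J₂ v) = -B u v) :
    IsQuaternionHermitian (paraHypercomplexBasis h₁ h₂ h₁₂ h₂₁) B where
  isSymm := ⟨hB⟩
  isSkewAdjoint_i := isSkewAdjoint_of_mul_self_eq_neg_smul_one (f := J₁) isUnit_one
    (by simpa using h₁) (by simpa using hB₁)
  isSkewAdjoint_j := isSkewAdjoint_of_mul_self_eq_neg_smul_one (f := J₂) isUnit_one.neg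
    (by simpa using h₂) (by simpa using hB₂)

end QuaternionHermitian

section Field

variable {K V : Type*} [Field K] [NeZero (2 : K)] [AddCommGroup V] [Module K V] {a b : K}
  {q : QuaternionAlgebra.Basis (Module.End K V) a 0 b} {g h : BilinForm K V} {w : V}

theorem IsQuaternionHermitian.surjective_lift_apply (hh : IsQuaternionHermitian q h)
    (hdim : Module.finrank K V = 4) (ha : a ≠ 0) (hb : b ≠ 0) (hw : h w w ≠ 0) :
    Function.Surjective fun x : ℍ[K,a,b] ↦ q.lift x w := by
  have : FiniteDimensional K V := .of_finrank_pos (by omega)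
  let orbit : ℍ[K,a,b] →ₗ[K] V := LinearMap.applyₗ w ∘ₗ q.liftHom.toLinearMap
  have hinjective : Function.Injective orbit :=
    (injective_iff_map_eq_zero orbit).mpr fun _ ↦ hh.eq_zero_of_lift_apply_eq_zero ha hb hw
  have hfinrank : Module.finrank K ℍ[K,a,b] = Module.finrank K V := by
    rw [QuaternionAlgebra.finrank_eq_four, hdim]
  exact (LinearMap.injective_iff_surjective_of_finrank_eq_finrank hfinrank).mp hinjective

theorem stmt_8_general (hdim : Module.finrank K V = 4) (ha : a ≠ 0) (hb : b ≠ 0)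
    (hg : IsQuaternionHermitian q g) (hh : IsQuaternionHermitian q h) (hg₀ : g ≠ 0)
    (hw : h w w ≠ 0) : g w w ≠ 0 ∧ ∀ u v, g u v = (g w w / h w w) * h u v := by
  have hproportional (u v : V) : g u v = (g w w / h w w) * h u v := by
    obtain ⟨x, rfl⟩ := hh.surjective_lift_apply hdim ha hb hw u
    obtain ⟨y, rfl⟩ := hh.surjective_lift_apply hdim ha hb hw v
    simp only [hg.apply_lift_lift, hh.apply_lift_lift]
    field_simp
  refine ⟨fun hgw ↦ hg₀ ?_, hproportional⟩
  ext u v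
  simp [hproportional u v, hgw]

end Field

theorem stmt_8 (V : Type*) [AddCommGroup V] [Module ℝ V]
    [FiniteDimensional ℝ V] (hdim : Module.finrank ℝ V = 4)
    (J1 J2 J3 : V →ₗ[ℝ] V)
    (hJ1 : J1 ∘ₗ J1 = -LinearMap.id)
    (hJ2 : J2 ∘ₗ J2 = LinearMap.id)
    (hJ3 : J3 ∘ₗ J3 = LinearMap.id)
    (h12 : J1 ∘ₗ J2 = J3)
    (h21 : J2 ∘ₗ J1 = -J3)
    (g h : V →ₗ[ℝ] V →ₗ[ℝ] ℝ)
    (gsymm : ∀ x y, g x y = g y x)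
    (gnd : ∀ x, (∀ y, g x y = 0) → x = 0)
    (gJ1 : ∀ x y, g (J1 x) (J1 y) = g x y)
    (gJ2 : ∀ x y, g (J2 x) (J2 y) = -g x y)
    (gJ3 : ∀ x y, g (J3 x) (J3 y) = -g x y)
    (hsymm : ∀ x y, h x y = h y x)
    (hnd : ∀ x, (∀ y, h x y = 0) → x = 0)
    (hJ1' : ∀ x y, h (J1 x) (J1 y) = h x y)
    (hJ2' : ∀ x y, h (J2 x) (J2 y) = -h x y)
    (hJ3' : ∀ x y, h (J3 x) (J3 y) = -h x y)
    (w : V) (hw : h w w ≠ 0) :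
    g w w ≠ 0 ∧ ∀ X Y, g X Y = (g w w / h w w) * h X Y := by
  have hg₀ : g ≠ 0 := by
    rintro rfl
    exact hw (by simp [gnd w fun _ ↦ rfl])
  exact stmt_8_general hdim (neg_ne_zero.mpr one_ne_zero) one_ne_zero
    (isQuaternionHermitian_paraHypercomplexBasis hJ1 hJ2 h12 h21 gsymm gJ1 gJ2)
    (isQuaternionHermitian_paraHypercomplexBasis hJ1 hJ2 h12 h21 hsymm hJ1' hJ2') hg₀ hw
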